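/- There is no X-completely transitive code C in H(m,q) satisfying Hypothesis (H) for which μ(X) has a regular normal elementary abelian subgroup; that is, if C satisfies Hypothesis (H), then there is no prime r and no nontrivial normal subgroup N of μ(X) such that N is an elementary abelian r-group (abelian with every nontrivial element of order r) acting regularly on Fin m. -/

import Mathlib

/-!
The point is that a regular normal subgroup of `μ(X)` puts the whole of `X` into a diagonal
position. Since `X ∩ B = 1`, each element of `μ(X)` has a unique lift to `X`. Fix a coordinate `i₀`;
the lift of the unique `n ∈ N` with `n i₀ = i` identifies the alphabet at `i₀` with the alphabet
at `i`, by a permutation `t i` of `Q`. As `X` normalises the lift of `N`, in these new labels every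
`x ∈ X` acts by a permutation of the coordinates combined with *one* permutation of the alphabet
used in all coordinates (`lift_diagonal`).

Consequently the number of pairs `(i, j)` of coordinates with equal (relabelled) entries, which is
`∑ a, n_a ^ 2` where `n_a` is the multiplicity of the letter `a`, is constant on `X`-orbits. As
`5 ≤ δ`, the spheres of radius `1` and `2` around a codeword lie in `C_1` and `C_2`, so this number
is constant on each of them. If the relabelled codeword is not constant that is impossible
(`not_const_on_spheres`): radius `1` forces all occurring letters to have the same multiplicity, and
radius `2` then gives two different values. If on the other hand all relabelled codewords are
constant, distinct codewords are at distance `m`, against `δ < m`.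
-/

namespace CTC

variable {m : ℕ} {Q : Type*}

/-- The automorphism of the Hamming graph `H(m,q)` given by the pair `(g, σ)`,
acting on a vertex `α` by `(α^x) i = (g (σ⁻¹ i)) (α (σ⁻¹ i))`. -/
def toPerm (g : Fin m → Equiv.Perm Q) (σ : Equiv.Perm (Fin m)) :
    Equiv.Perm (Fin m → Q) :=
  (Equiv.piCongrRight g).trans (σ.arrowCongr (Equiv.refl Q))

@[simp] lemma toPerm_apply (g : Fin m → Equiv.Perm Q) (σ : Equiv.Perm (Fin m))
    (α : Fin m → Q) (i : Fin m) :
    toPerm g σ α i = g (σ⁻¹ i) (α (σ⁻¹ i)) := rfl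

lemma toPerm_one : toPerm (fun _ : Fin m => (1 : Equiv.Perm Q)) 1 = 1 := by
  ext α i
  rfl

lemma toPerm_mul (g h : Fin m → Equiv.Perm Q) (σ τ : Equiv.Perm (Fin m)) :
    toPerm g σ * toPerm h τ = toPerm (fun j => g (τ j) * h j) (σ * τ) := by
  ext α i
  simp [toPerm_apply, Equiv.Perm.mul_apply]

lemma toPerm_inv (g : Fin m → Equiv.Perm Q) (σ : Equiv.Perm (Fin m)) :
    (toPerm g σ)⁻¹ = toPerm (fun i => (g (σ⁻¹ i))⁻¹) σ⁻¹ := by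
  rw [inv_eq_iff_mul_eq_one, toPerm_mul]
  have h1 : (fun j => g (σ⁻¹ j) * (g (σ⁻¹ j))⁻¹) = fun _ : Fin m => (1 : Equiv.Perm Q) := by
    funext j; simp
  have h2 : σ * σ⁻¹ = 1 := by simp
  rw [show (fun j => g ((σ⁻¹ : Equiv.Perm (Fin m)) j) * (g (σ⁻¹ j))⁻¹)
      = fun _ : Fin m => (1 : Equiv.Perm Q) from h1, h2, toPerm_one]

/-- The automorphism group of the Hamming graph, as a subgroup of the
permutations of the vertex set. -/
def AutG (m : ℕ) (Q : Type*) : Subgroup (Equiv.Perm (Fin m → Q)) where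
  carrier := {x | ∃ g σ, x = toPerm g σ}
  one_mem' := ⟨fun _ => 1, 1, toPerm_one.symm⟩
  mul_mem' := by
    rintro x y ⟨g, σ, rfl⟩ ⟨h, τ, rfl⟩
    exact ⟨_, _, toPerm_mul g h σ τ⟩
  inv_mem' := by
    rintro x ⟨g, σ, rfl⟩
    exact ⟨_, _, toPerm_inv g σ⟩

/-- The base group `B` of `Aut(Γ)`: the automorphisms `(g, σ)` with `σ = 1`. -/
def BaseG (m : ℕ) (Q : Type*) : Subgroup (Equiv.Perm (Fin m → Q)) where
  carrier := {x | ∃ g, x = toPerm g 1}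
  one_mem' := ⟨fun _ => 1, toPerm_one.symm⟩
  mul_mem' := by
    rintro x y ⟨g, rfl⟩ ⟨h, rfl⟩
    refine ⟨fun j => g j * h j, ?_⟩
    rw [toPerm_mul]
    simp
  inv_mem' := by
    rintro x ⟨g, rfl⟩
    refine ⟨fun i => (g i)⁻¹, ?_⟩
    rw [toPerm_inv]
    simp

/-- The projection `μ(X)` of a subgroup `X ≤ Aut(Γ)` to the group of
permutations of the coordinates. -/
def ProjGroup (X : Subgroup (Equiv.Perm (Fin m → Q))) : Subgroup (Equiv.Perm (Fin m)) where
  carrier := {σ | ∃ g, toPerm g σ ∈ X}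
  one_mem' := ⟨fun _ => 1, by rw [toPerm_one]; exact X.one_mem⟩
  mul_mem' := by
    rintro σ τ ⟨g, hg⟩ ⟨h, hh⟩
    exact ⟨fun j => g (τ j) * h j, by rw [← toPerm_mul]; exact X.mul_mem hg hh⟩
  inv_mem' := by
    rintro σ ⟨g, hg⟩
    exact ⟨fun i => (g (σ⁻¹ i))⁻¹, by rw [← toPerm_inv]; exact X.inv_mem hg⟩

variable [DecidableEq Q]

/-- `d(γ, C)`: the distance from a vertex `γ` to the code `C`. -/
noncomputable def distTo (C : Set (Fin m → Q)) (γ : Fin m → Q) : ℕ :=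
  sInf {d | ∃ β ∈ C, hammingDist γ β = d}

/-- `C_i`: the set of vertices at distance `i` from the code `C`. -/
def cell (C : Set (Fin m → Q)) (i : ℕ) : Set (Fin m → Q) :=
  {γ | distTo C γ = i}

/-- The covering radius `ρ` of the code `C`. -/
noncomputable def covRad (C : Set (Fin m → Q)) : ℕ :=
  sSup {e | ∃ γ, distTo C γ = e}

/-- `S` is a single orbit of the subgroup `X`. -/
def IsOrbitOf (X : Subgroup (Equiv.Perm (Fin m → Q))) (S : Set (Fin m → Q)) : Prop :=
  ∃ γ, S = {β | ∃ x ∈ X, x γ = β}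

/-- `C` is `(X,s)`-neighbour transitive: `C_i` is an `X`-orbit for `0 ≤ i ≤ s`. -/
def IsNT (C : Set (Fin m → Q)) (X : Subgroup (Equiv.Perm (Fin m → Q))) (s : ℕ) : Prop :=
  ∀ i ≤ s, IsOrbitOf X (cell C i)

/-- `C` is `X`-completely transitive: `C_i` is an `X`-orbit for `0 ≤ i ≤ ρ`. -/
def IsCT (C : Set (Fin m → Q)) (X : Subgroup (Equiv.Perm (Fin m → Q))) : Prop :=
  IsNT C X (covRad C)

/-- `δ` is the minimum distance of the code `C`. -/
def IsMinDist (C : Set (Fin m → Q)) (δ : ℕ) : Prop :=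
  IsLeast {d | ∃ α ∈ C, ∃ β ∈ C, α ≠ β ∧ hammingDist α β = d} δ

/-- The repetition code `Rep(m,q)`: the set of constant vertices. -/
def RepCode (m : ℕ) (Q : Type*) : Set (Fin m → Q) := {α | ∃ a, α = fun _ => a}

/-- Two codes are equivalent if one is the image of the other under an
automorphism of the Hamming graph. -/
def CodeEquiv (C C' : Set (Fin m → Q)) : Prop :=
  ∃ x ∈ AutG m Q, ⇑x '' C = C'

/-- `Γ_k(γ)`: the set of vertices at Hamming distance `k` from `γ`. -/
def sphere (γ : Fin m → Q) (k : ℕ) : Set (Fin m → Q) := {β | hammingDist γ β = k}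

/-- `C` is `s`-regular. -/
def IsSReg (C : Set (Fin m → Q)) (s : ℕ) : Prop :=
  ∀ i ≤ s, ∀ k ≤ m, ∀ γ₁ ∈ cell C i, ∀ γ₂ ∈ cell C i,
    (sphere γ₁ k ∩ C).ncard = (sphere γ₂ k ∩ C).ncard

/-- `C` is completely regular. -/
def IsCR (C : Set (Fin m → Q)) : Prop := IsSReg C (covRad C)

end CTC

namespace CTC

/-! ### Equal entries of words at small distance -/

section Combinatorics

variable {m : ℕ} {Q : Type*} [DecidableEq Q]

/-- The multiplicity of the letter `a` in the word `β`, as an integer. -/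
def mult (β : Fin m → Q) (a : Q) : ℤ := ∑ i, if β i = a then 1 else 0

/-- The number of pairs of coordinates in which `β` has equal entries; it equals the sum of the
squares of the multiplicities of the letters of `β`. -/
def pairs (β : Fin m → Q) : ℤ := ∑ i, ∑ j, if β i = β j then 1 else 0

lemma pairs_eq (β : Fin m → Q) : pairs β = ∑ i, mult β (β i) := by
  unfold pairs mult
  exact Finset.sum_congr rfl fun i _ => Finset.sum_congr rfl fun j _ => by simp only [eq_comm]

lemma mult_update (β : Fin m → Q) (i : Fin m) (b a : Q) :
    mult (Function.update β i b) a
      = mult β a - (if β i = a then 1 else 0) + (if b = a then 1 else 0) := by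
  unfold mult
  rw [← Finset.add_sum_erase _ _ (Finset.mem_univ i),
    ← Finset.add_sum_erase Finset.univ (fun j => if β j = a then (1 : ℤ) else 0)
      (Finset.mem_univ i)]
  have : ∑ x ∈ Finset.univ.erase i, (if Function.update β i b x = a then (1 : ℤ) else 0)
      = ∑ x ∈ Finset.univ.erase i, (if β x = a then (1 : ℤ) else 0) := by
    refine Finset.sum_congr rfl fun x hx => ?_
    rw [Function.update_of_ne (Finset.ne_of_mem_erase hx)]
  rw [this, Function.update_self]
  ring

/-- Replacing one letter `β i` by `b` changes the sum of squares of multiplicities by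
`(n_b + 1) ^ 2 + (n_{β i} - 1) ^ 2 - n_b ^ 2 - n_{β i} ^ 2`. -/
lemma pairs_update (β : Fin m → Q) (i : Fin m) (b : Q) (hb : β i ≠ b) :
    pairs (Function.update β i b) = pairs β + 2 * (mult β b - mult β (β i) + 1) := by
  rw [pairs_eq, pairs_eq, ← Finset.add_sum_erase _ _ (Finset.mem_univ i),
    ← Finset.add_sum_erase Finset.univ (fun j => mult β (β j)) (Finset.mem_univ i)]
  have h1 : ∑ x ∈ Finset.univ.erase i, mult (Function.update β i b) (Function.update β i b x)
      = ∑ x ∈ Finset.univ.erase i, (mult β (β x) - (if β x = β i then 1 else 0)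
          + (if β x = b then 1 else 0)) := by
    refine Finset.sum_congr rfl fun x hx => ?_
    rw [Function.update_of_ne (Finset.ne_of_mem_erase hx), mult_update]
    simp only [eq_comm]
  have h2 : ∀ a, mult β a = (if β i = a then 1 else 0)
      + ∑ x ∈ Finset.univ.erase i, (if β x = a then (1 : ℤ) else 0) := fun a =>
    (Finset.add_sum_erase _ _ (Finset.mem_univ i)).symm
  have h3 := h2 b
  have h4 := h2 (β i)
  rw [if_neg hb] at h3
  rw [if_pos rfl] at h4
  rw [h1, Finset.sum_add_distrib, Finset.sum_sub_distrib, Function.update_self, mult_update,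
    if_neg hb, if_pos rfl]
  linarith

lemma one_le_mult (β : Fin m → Q) (i : Fin m) : 1 ≤ mult β (β i) := by
  unfold mult
  rw [← Finset.add_sum_erase _ _ (Finset.mem_univ i), if_pos rfl]
  have : 0 ≤ ∑ x ∈ Finset.univ.erase i, (if β x = β i then (1 : ℤ) else 0) :=
    Finset.sum_nonneg fun x _ => by split_ifs <;> norm_num
  linarith

lemma mult_eq_one (β : Fin m → Q) (i : Fin m) (h : ∀ j, j ≠ i → β j ≠ β i) :
    mult β (β i) = 1 := by
  unfold mult
  rw [← Finset.add_sum_erase _ _ (Finset.mem_univ i), if_pos rfl,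
    Finset.sum_eq_zero fun x hx => if_neg (h x (Finset.ne_of_mem_erase hx)), add_zero]

lemma two_le_mult (β : Fin m → Q) (i j : Fin m) (hij : j ≠ i) (h : β j = β i) :
    2 ≤ mult β (β i) := by
  by_contra! hlt
  have h1 := one_le_mult (Function.update β j (β i)) i
  unfold mult at hlt
  rw [← Finset.add_sum_erase _ _ (Finset.mem_univ i), if_pos rfl,
    ← Finset.add_sum_erase _ _ (Finset.mem_erase.2 ⟨hij, Finset.mem_univ j⟩), if_pos h] at hlt
  have : 0 ≤ ∑ x ∈ (Finset.univ.erase i).erase j, (if β x = β i then (1 : ℤ) else 0) :=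
    Finset.sum_nonneg fun x _ => by split_ifs <;> norm_num
  linarith

lemma hammingDist_update (β : Fin m → Q) (i : Fin m) (b : Q) (hb : β i ≠ b) :
    hammingDist (Function.update β i b) β = 1 := by
  unfold hammingDist
  rw [Finset.card_eq_one]
  refine ⟨i, ?_⟩
  ext x
  by_cases hx : x = i
  · subst hx; simpa using hb.symm
  · simp [hx]

lemma hammingDist_update_update (β : Fin m → Q) (i j : Fin m) (b c : Q) (hij : i ≠ j)
    (hb : β i ≠ b) (hc : β j ≠ c) :
    hammingDist (Function.update (Function.update β i b) j c) β = 2 := by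
  unfold hammingDist
  rw [Finset.card_eq_two]
  refine ⟨i, j, hij, ?_⟩
  ext x
  by_cases hx : x = i
  · subst hx; simpa [Function.update_of_ne hij] using hb.symm
  · by_cases hy : x = j
    · subst hy; simpa using hc.symm
    · simp [hx, hy]

/-- The number of pairs of equal entries cannot be constant on both spheres of radius `1` and `2`
around a word that is not constant. -/
lemma not_const_on_spheres (hm : 3 ≤ m) (β : Fin m → Q) (i j : Fin m) (hij : β i ≠ β j)
    (h1 : ∀ γ γ', hammingDist γ β = 1 → hammingDist γ' β = 1 → pairs γ = pairs γ')
    (h2 : ∀ γ γ', hammingDist γ β = 2 → hammingDist γ' β = 2 → pairs γ = pairs γ') : False := by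
  have key : ∀ i j, β i ≠ β j → mult β (β i) = mult β (β j) := by
    intro i j hij
    have := h1 _ _ (hammingDist_update β i (β j) hij) (hammingDist_update β j (β i) hij.symm)
    rw [pairs_update _ _ _ hij, pairs_update _ _ _ hij.symm] at this
    linarith
  have hne : i ≠ j := fun h => hij (by rw [h])
  -- Exchanging the entries at `i` and `j` leaves the number of equal pairs unchanged.
  have hd0 := hammingDist_update_update β i j (β j) (β i) hne hij hij.symm
  have hs0 : pairs (Function.update (Function.update β i (β j)) j (β i)) = pairs β := by
    rw [pairs_update _ _ _ (by rw [Function.update_of_ne hne.symm]; exact hij.symm),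
      pairs_update _ _ _ hij, mult_update, mult_update, Function.update_of_ne hne.symm]
    simp only [if_true, if_neg hij, if_neg hij.symm]
    linarith [key i j hij]
  by_cases hrep : ∃ l, l ≠ i ∧ β l = β i
  · obtain ⟨l, hl, hli⟩ := hrep
    have hlj : β l ≠ β j := hli ▸ hij
    have hd := hammingDist_update_update β i l (β j) (β j) hl.symm hij hlj
    have := h2 _ _ hd hd0
    rw [hs0, pairs_update _ _ _ (by rwa [Function.update_of_ne hl]),
      pairs_update _ _ _ hij, mult_update, mult_update, Function.update_of_ne hl, hli] at this
    simp only [if_true, if_neg hij, if_neg hij.symm] at this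
    linarith [key i j hij]
  · push Not at hrep
    have hi1 := mult_eq_one β i hrep
    obtain ⟨l, hl⟩ : ∃ l : Fin m, l ∉ ({i, j} : Finset (Fin m)) := by
      by_contra! h
      have h3 := Finset.card_le_card (fun x _ => h x : Finset.univ ⊆ ({i, j} : Finset (Fin m)))
      have h4 := Finset.card_le_two (a := i) (b := j)
      simp only [Finset.card_univ, Fintype.card_fin] at h3
      omega
    simp only [Finset.mem_insert, Finset.mem_singleton, not_or] at hl
    have hil : β i ≠ β l := (hrep l hl.1).symm
    have hjl : β j ≠ β l := fun h => by
      have := two_le_mult β j l hl.2 h.symm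
      linarith [key i j hij]
    have hd := hammingDist_update_update β i j (β l) (β l) hne hil hjl
    have := h2 _ _ hd hd0
    rw [hs0, pairs_update _ _ _ (by rwa [Function.update_of_ne hne.symm]),
      pairs_update _ _ _ hil, mult_update, mult_update, Function.update_of_ne hne.symm] at this
    simp only [if_true, if_neg hij, if_neg hil, if_neg hjl.symm] at this
    linarith [key i j hij, key i l hil]

end Combinatorics

/-! ### Diagonal form of the group -/

section Diagonal

variable {m : ℕ} {Q : Type*}

/-- When `X ∩ B = 1`, an element of `X` is determined by its action on the coordinates. -/
lemma lift_unique {X : Subgroup (Equiv.Perm (Fin m → Q))} (hXB : X ⊓ BaseG m Q = ⊥)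
    {g h : Fin m → Equiv.Perm Q} {σ : Equiv.Perm (Fin m)}
    (hg : toPerm g σ ∈ X) (hh : toPerm h σ ∈ X) : g = h := by
  have hmem : toPerm g σ * (toPerm h σ)⁻¹ ∈ X ⊓ BaseG m Q := by
    refine ⟨X.mul_mem hg (X.inv_mem hh), ?_⟩
    rw [toPerm_inv, toPerm_mul, mul_inv_cancel]
    exact ⟨_, rfl⟩
  rw [hXB, Subgroup.mem_bot, mul_inv_eq_one] at hmem
  funext i
  ext a
  have := congrFun (congrArg (fun e => (e : Equiv.Perm (Fin m → Q)) (fun _ => a)) hmem) (σ i)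
  simpa using this

/-- The permutations `t i := G i i₀`, read off the lifts `(G i, n i)` of the elements `n i` of `N`
with `n i i₀ = i`, simultaneously diagonalise `X`: relabelled by `t`, the permutation of the
alphabet by which an element of `X` acts is the same in all coordinates. -/
lemma lift_diagonal {X : Subgroup (Equiv.Perm (Fin m → Q))} (hXB : X ⊓ BaseG m Q = ⊥)
    {N : Subgroup (Equiv.Perm (Fin m))}
    (hnorm : ∀ σ ∈ ProjGroup X, ∀ n ∈ N, σ * n * σ⁻¹ ∈ N)
    (hreg : ∀ i j : Fin m, ∃! n : Equiv.Perm (Fin m), n ∈ N ∧ n i = j)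
    (i₀ : Fin m) (n : Fin m → Equiv.Perm (Fin m)) (hnN : ∀ i, n i ∈ N) (hn : ∀ i, n i i₀ = i)
    (G : Fin m → Fin m → Equiv.Perm Q) (hG : ∀ i, toPerm (G i) (n i) ∈ X)
    {h : Fin m → Equiv.Perm Q} {σ : Equiv.Perm (Fin m)} (hx : toPerm h σ ∈ X) (i : Fin m) :
    h i * G i i₀ = G (σ i) i₀ * ((G (σ i₀) i₀)⁻¹ * h i₀) := by
  -- Both sides are the unique element of `N` taking `σ i₀` to `σ i`.
  have hσ : σ * n i * σ⁻¹ = n (σ i) * (n (σ i₀))⁻¹ := by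
    refine (hreg (σ i₀) (σ i)).unique ⟨hnorm σ ⟨h, hx⟩ _ (hnN i), ?_⟩
      ⟨N.mul_mem (hnN _) (N.inv_mem (hnN _)), ?_⟩
    · simp [hn]
    · rw [Equiv.Perm.mul_apply, Equiv.Perm.inv_eq_iff_eq.2 (hn (σ i₀)).symm, hn]
  have h1 := X.mul_mem hx (hG i)
  have h2 := X.mul_mem (X.mul_mem (hG (σ i)) (X.inv_mem (hG (σ i₀)))) hx
  rw [toPerm_mul] at h1
  rw [toPerm_inv, toPerm_mul, toPerm_mul, ← hσ, inv_mul_cancel_right] at h2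
  have := congrFun (lift_unique hXB h1 h2) i₀
  have h3 : (n (σ i₀))⁻¹ (σ i₀) = i₀ := Equiv.Perm.inv_eq_iff_eq.2 (hn (σ i₀)).symm
  simpa [hn, h3, mul_assoc] using this

end Diagonal

/-! ### Spheres around codewords -/

section Cells

variable {m : ℕ} {Q : Type*} [DecidableEq Q]

lemma distTo_le {C : Set (Fin m → Q)} {γ β : Fin m → Q} (hβ : β ∈ C) :
    distTo C γ ≤ hammingDist γ β := Nat.sInf_le ⟨β, hβ, rfl⟩

/-- Around a codeword, the sphere of radius `k` lies in the `k`-th cell if `2 k ≤ δ`. -/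
lemma distTo_eq {C : Set (Fin m → Q)} {δ k : ℕ} (hδ : IsMinDist C δ) (hk : 2 * k ≤ δ)
    {α γ : Fin m → Q} (hα : α ∈ C) (hγ : hammingDist γ α = k) : distTo C γ = k := by
  refine le_antisymm (hγ ▸ distTo_le hα) ?_
  refine le_csInf ⟨_, α, hα, rfl⟩ ?_
  rintro d ⟨β, hβ, rfl⟩
  by_cases hab : α = β
  · rw [← hab, hγ]
  · have h1 := hδ.2 ⟨α, hα, β, hβ, hab, rfl⟩
    have h2 := hammingDist_triangle_left α β γ
    omega

lemma distTo_le_covRad {C : Set (Fin m → Q)} (hC : C.Nonempty) (γ : Fin m → Q) :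
    distTo C γ ≤ covRad C := by
  refine le_csSup ⟨m, ?_⟩ ⟨γ, rfl⟩
  rintro e ⟨γ', rfl⟩
  obtain ⟨β, hβ⟩ := hC
  exact (distTo_le hβ).trans (hammingDist_le_card_fintype.trans (by simp))

/-- A function invariant under `X` is constant on the spheres of radius `k`, `2 k ≤ δ`, around
the codewords of an `X`-completely transitive code. -/
lemma const_on_sphere {C : Set (Fin m → Q)} {X : Subgroup (Equiv.Perm (Fin m → Q))}
    {δ k : ℕ} (hδ : IsMinDist C δ) (hk : 2 * k ≤ δ) (hCT : IsCT C X) {F : (Fin m → Q) → ℤ}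
    (hF : ∀ x ∈ X, ∀ γ, F (x γ) = F γ) {α γ γ' : Fin m → Q} (hα : α ∈ C)
    (hγ : hammingDist γ α = k) (hγ' : hammingDist γ' α = k) : F γ = F γ' := by
  have h1 := distTo_eq hδ hk hα hγ
  have h2 := distTo_eq hδ hk hα hγ'
  obtain ⟨ω, hω⟩ := hCT k (h1 ▸ distTo_le_covRad ⟨α, hα⟩ γ)
  have h1' : γ ∈ cell C k := h1
  have h2' : γ' ∈ cell C k := h2
  rw [hω] at h1' h2'
  obtain ⟨x, hx, rfl⟩ := h1'
  obtain ⟨y, hy, rfl⟩ := h2'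
  rw [hF x hx, hF y hy]

end Cells

end CTC

open CTC in
/-- Proposition 4.3: no code satisfying Hypothesis (H) has
`μ(X)` of affine type, i.e. `μ(X)` has no nontrivial regular normal
elementary abelian subgroup. -/
theorem statement17 {m q : ℕ} {Q : Type*} [Fintype Q] [DecidableEq Q]
    (hm : 2 ≤ m) (hq2 : 2 ≤ q) (hcard : Fintype.card Q = q)
    (C : Set (Fin m → Q)) (hC : 2 < C.ncard)
    (δ : ℕ) (hδ : IsMinDist C δ) (hδ5 : 5 ≤ δ) (hδm : δ < m)
    (X : Subgroup (Equiv.Perm (Fin m → Q))) (hX : X ≤ AutG m Q)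
    (hXB : X ⊓ BaseG m Q = ⊥) (hCT : IsCT C X)
    (h2t : ∀ i j k l : Fin m, i ≠ j → k ≠ l →
      ∃ σ ∈ ProjGroup X, σ i = k ∧ σ j = l)
    (hnoAlt : ¬ alternatingGroup (Fin m) ≤ ProjGroup X) :
    ¬ ∃ (r : ℕ) (N : Subgroup (Equiv.Perm (Fin m))),
        r.Prime ∧ N ≤ ProjGroup X ∧ N ≠ ⊥ ∧
        (∀ σ ∈ ProjGroup X, ∀ n ∈ N, σ * n * σ⁻¹ ∈ N) ∧
        (∀ a ∈ N, ∀ b ∈ N, a * b = b * a) ∧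
        (∀ n ∈ N, n ≠ 1 → n ^ r = 1) ∧
        (∀ i j : Fin m, ∃! n : Equiv.Perm (Fin m), n ∈ N ∧ n i = j) := by
  rintro ⟨r, N, -, hNX, -, hnorm, -, -, hreg⟩
  let i₀ : Fin m := ⟨0, by omega⟩
  choose n hn _ using hreg i₀
  choose G hG using fun i => hNX (hn i).1
  have hdiag := fun (h : Fin m → Equiv.Perm Q) σ (hx : toPerm h σ ∈ X) i =>
    lift_diagonal hXB hnorm hreg i₀ n (fun i => (hn i).1) (fun i => (hn i).2) G hG hx i
  -- `R` relabels the alphabets; it is an isometry of the Hamming graph.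
  let R : (Fin m → Q) ≃ (Fin m → Q) := Equiv.piCongrRight fun i => (G i i₀)⁻¹
  have hR : ∀ α β, hammingDist (R α) (R β) = hammingDist α β := fun α β =>
    hammingDist_comp (fun i => ⇑(G i i₀)⁻¹) fun i => Equiv.injective _
  have hinv : ∀ x ∈ X, ∀ γ, pairs (R (x γ)) = pairs (R γ) := by
    intro x hx γ
    obtain ⟨h, σ, rfl⟩ := hX hx
    have hval : ∀ i, R (toPerm h σ γ) (σ i) = ((G (σ i₀) i₀)⁻¹ * h i₀) (R γ i) := by
      intro i
      have h1 : (G (σ i) i₀)⁻¹ * h i = ((G (σ i₀) i₀)⁻¹ * h i₀) * (G i i₀)⁻¹ := by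
        rw [inv_mul_eq_iff_eq_mul, ← mul_assoc, ← hdiag h σ hx i, mul_inv_cancel_right]
      have h2 := congrArg (fun e : Equiv.Perm Q => e (γ i)) h1
      simpa [R] using h2
    unfold pairs
    rw [← Equiv.sum_comp σ]
    refine Finset.sum_congr rfl fun i _ => ?_
    rw [← Equiv.sum_comp σ]
    refine Finset.sum_congr rfl fun j _ => ?_
    simp only [hval, EmbeddingLike.apply_eq_iff_eq]
  have hconst : ∀ α ∈ C, ∀ i j, R α i = R α j := by
    intro α hα i j
    by_contra hij
    have hs : ∀ k, 2 * k ≤ δ → ∀ γ γ', hammingDist γ (R α) = k → hammingDist γ' (R α) = k →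
        pairs γ = pairs γ' := by
      intro k hk γ γ' hγ hγ'
      obtain ⟨γ, rfl⟩ := R.surjective γ
      obtain ⟨γ', rfl⟩ := R.surjective γ'
      rw [hR] at hγ hγ'
      exact const_on_sphere (F := fun γ => pairs (R γ)) hδ hk hCT hinv hα hγ hγ'
    exact not_const_on_spheres (by omega) (R α) i j hij (hs 1 (by omega)) (hs 2 (by omega))
  obtain ⟨α, hα, β, hβ, hne, hd⟩ := hδ.1
  have hall : ∀ i, R α i ≠ R β i := by
    intro i hi
    refine hne (R.injective (funext fun j => ?_))
    rw [hconst α hα j i, hconst β hβ j i, hi]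
  have hdm : hammingDist (R α) (R β) = m := by
    unfold hammingDist
    rw [Finset.filter_true_of_mem fun i _ => hall i]
    simp
  rw [hR] at hdm
  omega
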